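/- Theorem 2.2 (solutions in irrational directions are viscosity solutions): Let d ≥ 2, let θ, Θ with 0 < θ ≤ Θ, and let m̄ : S^{d-1} → [θ,Θ] be continuous. Let U ⊆ ℝ^d × (0,∞) be open and let ũ : ℝ^d × (0,∞) → ℝ be locally bounded and upper semicontinuous. Suppose there is K > 0 such that for every smooth φ : ℝ^d × (0,∞) → ℝ and every point (x₀,t₀) ∈ U at which ũ − φ has a strict local maximum: (a) if Dφ(x₀,t₀) ∉ ℝℤ^d then m̄(Dφ/‖Dφ‖) φ_t − tr((Id − (Dφ/‖Dφ‖) ⊗ (Dφ/‖Dφ‖)) D²φ) ≤ 0 at (x₀,t₀); (b) if Dφ(x₀,t₀) ∈ ℝℤ^d \ {0} and δ > 0 satisfies ‖(Id − (Dφ/‖Dφ‖) ⊗ (Dφ/‖Dφ‖)) D²φ(x₀,t₀)‖ ≤ δ‖Dφ(x₀,t₀)‖, then φ_t(x₀,t₀) ≤ Kδ‖Dφ(x₀,t₀)‖; (c) if Dφ(x₀,t₀) = 0 and D²φ(x₀,t₀) = 0 then φ_t(x₀,t₀) ≤ 0. Then ũ is a viscosity subsolution of m̄(Dũ/‖Dũ‖)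 ũ_t − tr((Id − (Dũ/‖Dũ‖) ⊗ (Dũ/‖Dũ‖)) D²ũ) = 0 in U, i.e., for every smooth φ and every strict local maximum point (x₀,t₀) ∈ U of ũ − φ: if Dφ(x₀,t₀) ≠ 0 then m̄(Dφ/‖Dφ‖) φ_t − tr((Id − (Dφ/‖Dφ‖) ⊗ (Dφ/‖Dφ‖)) D²φ) ≤ 0 at (x₀,t₀), and if Dφ(x₀,t₀) = 0 and D²φ(x₀,t₀) = 0 then φ_t(x₀,t₀) ≤ 0. -/

import Mathlib

open Set Filter Topology

noncomputable section

abbrev Euc (d : ℕ) := EuclideanSpace ℝ (Fin d)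

/-- p ∈ ℝℤ^d, i.e. p is a real multiple of an integer vector. -/
def RatDir {d : ℕ} (p : Euc d) : Prop :=
  ∃ (c : ℝ) (k : Fin d → ℤ), ∀ i, p i = c * (k i : ℝ)

noncomputable def clTrace {d : ℕ} (A : Euc d →L[ℝ] Euc d) : ℝ :=
  LinearMap.trace ℝ (Euc d) (A : Euc d →ₗ[ℝ] Euc d)

/-- Id − p ⊗ p as a continuous linear map. -/
noncomputable def projPerp {d : ℕ} (p : Euc d) : Euc d →L[ℝ] Euc d :=
  ContinuousLinearMap.id ℝ (Euc d) - (innerSL ℝ p).smulRight p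

noncomputable def spaceGrad {d : ℕ} (φ : Euc d × ℝ → ℝ) (x : Euc d) (t : ℝ) : Euc d :=
  gradient (fun y => φ (y, t)) x

noncomputable def spaceHess {d : ℕ} (φ : Euc d × ℝ → ℝ) (x : Euc d) (t : ℝ) :
    Euc d →L[ℝ] Euc d :=
  fderiv ℝ (fun y => gradient (fun z => φ (z, t)) y) x

noncomputable def timeDeriv {d : ℕ} (φ : Euc d × ℝ → ℝ) (x : Euc d) (t : ℝ) : ℝ :=
  deriv (fun s => φ (x, s)) t

/-- The effective level-set operator m̄(p̂) φ_t − tr((Id − p̂⊗p̂) D²φ) at a point,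
for p̂ the normalized spatial gradient. -/
noncomputable def effOp {d : ℕ} (mb : Euc d → ℝ) (φ : Euc d × ℝ → ℝ)
    (x : Euc d) (t : ℝ) : ℝ :=
  mb (‖spaceGrad φ x t‖⁻¹ • spaceGrad φ x t) * timeDeriv φ x t -
    clTrace ((projPerp (‖spaceGrad φ x t‖⁻¹ • spaceGrad φ x t)).comp (spaceHess φ x t))

/-- f has a strict local maximum at p. -/
def StrictLocalMax {X : Type*} [TopologicalSpace X] (f : X → ℝ) (p : X) : Prop :=
  ∃ V ∈ nhds p, ∀ q ∈ V, q ≠ p → f q < f p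

/-! Fix a test function and perturb the spatial gradient of its Taylor paraboloid: the perturbed
paraboloids still touch `u` from above near the original point, with gradients depending on the
contact point. If these gradients can be taken non-resonant for arbitrarily small perturbations,
the inequality there passes to the limit. Otherwise, since there are only countably many resonant
lines, Baire's theorem gives an open set of perturbations whose contact gradients all lie on one
line `ℝ ∙ p`. The maximum of `u` minus the paraboloid is then an explicit quadratic function of the
perturbation in the directions tangent to the level set, so the touching paraboloid can be
translated in these directions. Hence its Hessian is nonnegative on them, and it may be replaced by
a paraboloid which is flat along them, for which the resonant condition bounds the velocity by `0`.
As the mobility is nonnegative, the two signs combine to the desired inequality. -/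

section Subgradient

variable {f g : ℝ → ℝ}

lemma hasDerivWithinAt_of_subgradient {S : Set ℝ} {s : ℝ}
    (h : ∀ s ∈ S, ∀ t ∈ S, (t - s) * g s ≤ f t - f s) (hs : s ∈ S)
    (hg : ContinuousWithinAt g S s) : HasDerivWithinAt f (g s) S s := by
  have hg₀ : (fun t => g t - g s) =o[𝓝[S] s] fun _ => (1 : ℝ) :=
    (Asymptotics.isLittleO_one_iff ℝ).2 (tendsto_sub_nhds_zero_iff.2 hg)
  have ho : (fun t => (t - s) * (g t - g s)) =o[𝓝[S] s] fun t => t - s := by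
    simpa using (Asymptotics.isBigO_refl (fun t => t - s) (𝓝[S] s)).mul_isLittleO hg₀
  refine hasDerivWithinAt_iff_isLittleO.2 ((Asymptotics.IsBigO.of_bound' ?_).trans_isLittleO ho)
  filter_upwards [self_mem_nhdsWithin] with t ht
  have hst := h s hs t ht
  have hts := h t ht s hs
  rw [smul_eq_mul, Real.norm_of_nonneg (by linarith)]
  exact le_trans (by linarith) (le_abs_self _)

lemma integral_eq_sub_of_subgradient {a b : ℝ} (hab : a ≤ b)
    (h : ∀ s ∈ Icc a b, ∀ t ∈ Icc a b, (t - s) * g s ≤ f t - f s)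
    (hg : ContinuousOn g (Icc a b)) : ∫ x in a..b, g x = f b - f a := by
  have hderiv : ∀ s ∈ Icc a b, HasDerivWithinAt f (g s) (Icc a b) s := fun s hs =>
    hasDerivWithinAt_of_subgradient h hs (hg s hs)
  exact intervalIntegral.integral_eq_sub_of_hasDerivAt_of_le hab
    (fun s hs => (hderiv s hs).continuousWithinAt)
    (fun s hs => (hderiv s (Ioo_subset_Icc_self hs)).hasDerivAt (Icc_mem_nhds hs.1 hs.2))
    (hg.intervalIntegrable_of_Icc hab)

end Subgradient

lemma exists_inter_interior_nonempty_of_subset_iUnion {X ι : Type*} [TopologicalSpace X]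
    [BaireSpace X] [Countable ι] {O : Set X} (hO : IsOpen O) (hne : O.Nonempty) {F : ι → Set X}
    (hF : ∀ i, IsClosed (F i)) (hOF : O ⊆ ⋃ i, F i) : ∃ i, (O ∩ interior (F i)).Nonempty := by
  have hcover : ⋃ i : Option ι, i.elim Oᶜ F = univ := by
    refine eq_univ_of_forall fun x => mem_iUnion.2 ?_
    by_cases hx : x ∈ O
    · obtain ⟨i, hi⟩ := mem_iUnion.1 (hOF hx)
      exact ⟨some i, hi⟩
    · exact ⟨none, hx⟩
  have hclosed : ∀ i : Option ι, IsClosed (i.elim Oᶜ F) := by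
    rintro (_ | i)
    exacts [hO.isClosed_compl, hF i]
  obtain ⟨x, hxO, hx⟩ :=
    (dense_iUnion_interior_of_closed hclosed hcover).inter_open_nonempty O hO hne
  obtain ⟨_ | i, hi⟩ := mem_iUnion.1 hx
  · exact absurd hxO (interior_subset hi)
  · exact ⟨i, x, hxO, hi⟩

lemma isClosed_setOf_exists_isMaxOn_sub {P X : Type*} [TopologicalSpace P] [TopologicalSpace X]
    [T2Space X] {N : Set X} (hN : IsCompact N) {f : X → ℝ} (hf : UpperSemicontinuousOn f N)
    {g : P → X → ℝ} (hg : Continuous (Function.uncurry g)) {C : Set (P × X)} (hC : IsClosed C) :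
    IsClosed {p | ∃ x, x ∈ N ∧ IsMaxOn (fun y => f y - g p y) N x ∧ (p, x) ∈ C} := by
  have := isCompact_iff_compactSpace.1 hN
  have hgraph : IsClosed {q : X × ℝ | q.1 ∈ N ∧ q.2 ≤ f q.1} :=
    (upperSemicontinuousOn_iff_isClosed_hypograph hN.isClosed).1 hf
  have hle : ∀ y, IsClosed {q : P × N | f y - g q.1 y ≤ f q.2 - g q.1 q.2} := fun y => by
    have hmap : Continuous fun q : P × N => ((q.2 : X), f y - g q.1 y + g q.1 q.2) := by
      fun_prop
    convert hgraph.preimage hmap using 1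
    ext q
    simp [le_sub_iff_add_le]
  have hmax : IsClosed {q : P × N | (∀ y ∈ N, f y - g q.1 y ≤ f q.2 - g q.1 q.2) ∧
      (q.1, (q.2 : X)) ∈ C} := by
    simp only [ofPred_and, ofPred_forall]
    exact (isClosed_biInter fun y _ => hle y).inter (hC.preimage (by fun_prop))
  convert isClosedMap_fst_of_compactSpace _ hmax using 1
  ext p
  simp [isMaxOn_iff, and_left_comm]

lemma span_singleton_eq_of_mem {𝕜 F : Type*} [DivisionRing 𝕜] [AddCommGroup F] [Module 𝕜 F]
    {p q : F} (hp : p ≠ 0) (hpq : p ∈ 𝕜 ∙ q) : (𝕜 ∙ p) = 𝕜 ∙ q := by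
  obtain ⟨c, rfl⟩ := Submodule.mem_span_singleton.1 hpq
  exact Submodule.span_singleton_smul_eq (isUnit_iff_ne_zero.2 (left_ne_zero_of_smul hp)) q

lemma tendsto_add_smul_nhdsGT_zero {F : Type*} [NormedAddCommGroup F] [NormedSpace ℝ F]
    (a b : F) : Tendsto (fun ε : ℝ => a + ε • b) (𝓝[>] 0) (𝓝 a) :=
  ((show Continuous fun ε : ℝ => a + ε • b by fun_prop).tendsto' 0 a (by simp)).mono_left
    nhdsWithin_le_nhds

section Projection

lemma trace_starProjection_comp_nonneg {E : Type*} [NormedAddCommGroup E] [InnerProductSpace ℝ E]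
    [FiniteDimensional ℝ E] (K : Submodule ℝ E) {H : E →L[ℝ] E}
    (hH : ∀ v ∈ K, 0 ≤ inner ℝ (H v) v) :
    0 ≤ LinearMap.trace ℝ E (K.starProjection ∘L H).toLinearMap := by
  set P : E →ₗ[ℝ] E := K.starProjection.toLinearMap
  have hP : P * P = P := by
    rw [← ContinuousLinearMap.toLinearMap_mul, K.isIdempotentElem_starProjection.eq]
  have hcycle : LinearMap.trace ℝ E (P * H.toLinearMap) =
      LinearMap.trace ℝ E (P * H.toLinearMap * P) := by
    rw [LinearMap.trace_mul_comm ℝ (P * H.toLinearMap) P, ← mul_assoc, hP]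
  change 0 ≤ LinearMap.trace ℝ E (P * H.toLinearMap)
  rw [hcycle, LinearMap.trace_eq_sum_inner _ (stdOrthonormalBasis ℝ E)]
  refine Finset.sum_nonneg fun i _ => ?_
  set b := stdOrthonormalBasis ℝ E i
  calc 0 ≤ inner ℝ (H (K.starProjection b)) (K.starProjection b) :=
        hH _ (K.starProjection_apply_mem b)
    _ = inner ℝ b (K.starProjection (H (K.starProjection b))) := by
        rw [real_inner_comm, K.inner_starProjection_left_eq_right]

lemma projPerp_inv_norm_smul {d : ℕ} (p : Euc d) :
    projPerp (‖p‖⁻¹ • p) = (ℝ ∙ p)ᗮ.starProjection := by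
  ext1 v
  rw [Submodule.starProjection_orthogonal]
  simp only [projPerp, sub_apply, ContinuousLinearMap.smulRight_apply, innerSL_apply_apply,
    Submodule.starProjection_singleton, inner_smul_left, smul_smul]
  simp [div_eq_mul_inv, sq, mul_comm, mul_left_comm]

end Projection

section Quadratic

variable {E : Type*} [NormedAddCommGroup E] [NormedSpace ℝ E] {z₀ : E} {L : E →L[ℝ] ℝ}
  {A : E →L[ℝ] E →L[ℝ] ℝ}

/-- The quadratic polynomial vanishing at `z₀`, with gradient `L` and Hessian `A` there. -/
def quadFn (z₀ : E) (L : E →L[ℝ] ℝ) (A : E →L[ℝ] E →L[ℝ] ℝ) (z : E) : ℝ :=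
  L (z - z₀) + 1 / 2 * A (z - z₀) (z - z₀)

lemma quadFn_self : quadFn z₀ L A z₀ = 0 := by simp [quadFn]

lemma quadFn_add_vector (v : E) : quadFn z₀ L A (z₀ + v) = L v + 1 / 2 * A v v := by
  simp [quadFn]

lemma continuous_quadFn :
    Continuous fun w : (E →L[ℝ] ℝ) × E => quadFn z₀ w.1 A w.2 := by
  unfold quadFn
  fun_prop

lemma contDiff_quadFn {n : WithTop ℕ∞} : ContDiff ℝ n (quadFn z₀ L A) := by
  unfold quadFn
  fun_prop

lemma hasFDerivAt_quadFn (hA : ∀ v w, A v w = A w v) (z : E) :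
    HasFDerivAt (quadFn z₀ L A) (L + A (z - z₀)) z := by
  have hsub : HasFDerivAt (fun z => z - z₀) (.id ℝ E) z := (hasFDerivAt_id z).sub_const z₀
  refine ((L.hasFDerivAt.comp z hsub).add
    (((A.hasFDerivAt.comp z hsub).clm_apply hsub).const_mul (1 / 2))).congr_fderiv ?_
  ext v
  simp [hA v z, hA v z₀]
  ring

lemma fderiv_quadFn (hA : ∀ v w, A v w = A w v) :
    fderiv ℝ (quadFn z₀ L A) = fun z => L + A (z - z₀) :=
  funext fun z => (hasFDerivAt_quadFn hA z).fderiv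

lemma fderiv_quadFn_self (hA : ∀ v w, A v w = A w v) : fderiv ℝ (quadFn z₀ L A) z₀ = L := by
  simp [fderiv_quadFn hA]

lemma fderiv_fderiv_quadFn (hA : ∀ v w, A v w = A w v) (z : E) :
    fderiv ℝ (fderiv ℝ (quadFn z₀ L A)) z = A := by
  rw [fderiv_quadFn hA]
  exact ((A.hasFDerivAt.comp z ((hasFDerivAt_id z).sub_const z₀)).const_add L).fderiv

lemma quadFn_sub_quadFn (hA : ∀ v w, A v w = A w v) (z y : E) :
    quadFn z₀ L A y - quadFn z₀ L A z = quadFn z (L + A (z - z₀)) A y := by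
  obtain ⟨h, rfl⟩ : ∃ h, y = z + h := ⟨y - z, by simp⟩
  have hsub : z + h - z₀ = z - z₀ + h := by abel
  simp only [quadFn, add_sub_cancel_left, hsub, map_add, add_apply, hA h (z - z₀)]
  ring

lemma sub_quadFn_isLittleO {φ : E → ℝ} {φ' : E → E →L[ℝ] ℝ}
    (hφ : ∀ z, HasFDerivAt φ (φ' z) z) (hφ' : HasFDerivAt φ' A z₀) :
    (fun z => φ z - φ z₀ - quadFn z₀ (φ' z₀) A z) =o[𝓝 z₀] fun z => ‖z - z₀‖ ^ 2 := by
  have hderiv : ∀ z ∈ univ, HasFDerivWithinAt (fun z => φ z - quadFn z₀ (φ' z₀) A z)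
      (φ' z - φ' z₀ - A (z - z₀)) univ z := fun z _ => by
    rw [hasFDerivWithinAt_univ, sub_sub]
    exact (hφ z).sub (hasFDerivAt_quadFn (second_derivative_symmetric hφ hφ') z)
  have ho := convex_univ.isLittleO_pow_succ (n := 1) (mem_univ z₀) hderiv
    (by simpa using hφ'.isLittleO.norm_right)
  simpa only [nhdsWithin_univ, quadFn_self, sub_zero, sub_right_comm] using ho

/-- `(L, A)` belongs to the second-order superjet of `u` at `z`. -/
def IsSuperjet (u : E → ℝ) (z : E) (L : E →L[ℝ] ℝ) (A : E →L[ℝ] E →L[ℝ] ℝ) : Prop :=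
  (∀ v w, A v w = A w v) ∧ ∀ᶠ y in 𝓝 z, u y ≤ u z + quadFn z L A y

end Quadratic

section Contact

variable {E : Type*} [NormedAddCommGroup E] [NormedSpace ℝ E] {u : E → ℝ} {N : Set E}
  {z₀ z z₁ : E} {L L' L₀ : E →L[ℝ] ℝ} {A : E →L[ℝ] E →L[ℝ] ℝ}

/-- Up to an additive constant, the paraboloid `quadFn z₀ L A` touches `u` on `N` from above at
`z`. Its gradient there is `L + A (z - z₀)`; the centre `z₀` stays fixed while `L` is perturbed. -/
def IsContact (u : E → ℝ) (N : Set E) (z₀ : E) (A : E →L[ℝ] E →L[ℝ] ℝ) (L : E →L[ℝ] ℝ)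
    (z : E) : Prop :=
  z ∈ N ∧ IsMaxOn (fun y => u y - quadFn z₀ L A y) N z

lemma exists_isContact (hN : IsCompact N) (hne : N.Nonempty) (hu : UpperSemicontinuousOn u N)
    (L : E →L[ℝ] ℝ) : ∃ z, IsContact u N z₀ A L z := by
  have husc : UpperSemicontinuousOn (fun y => u y + -quadFn z₀ L A y) N :=
    hu.add (contDiff_quadFn (n := 0)).continuous.neg.continuousOn.upperSemicontinuousOn
  simpa only [IsContact, sub_eq_add_neg] using husc.exists_isMaxOn hne hN

lemma isClosed_setOf_exists_isContact (hN : IsCompact N) (hu : UpperSemicontinuousOn u N)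
    {C : Set (E →L[ℝ] ℝ)} (hC : IsClosed C) :
    IsClosed {L | ∃ z, IsContact u N z₀ A L z ∧ L + A (z - z₀) ∈ C} := by
  have hgrad : Continuous fun w : (E →L[ℝ] ℝ) × E => w.1 + A (w.2 - z₀) := by fun_prop
  simpa only [IsContact, and_assoc, mem_preimage] using
    isClosed_setOf_exists_isMaxOn_sub hN hu (continuous_quadFn (z₀ := z₀) (A := A))
      (hC.preimage hgrad)

lemma IsContact.le (hA : ∀ v w, A v w = A w v) (hz : IsContact u N z₀ A L z) {y : E}
    (hy : y ∈ N) : u y ≤ u z + quadFn z (L + A (z - z₀)) A y := by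
  have hmax : u y - quadFn z₀ L A y ≤ u z - quadFn z₀ L A z := hz.2 hy
  linarith [quadFn_sub_quadFn (z₀ := z₀) (L := L) hA z y]

lemma IsContact.isSuperjet (hA : ∀ v w, A v w = A w v) (hz : IsContact u N z₀ A L z)
    (hN : N ∈ 𝓝 z) : IsSuperjet u z (L + A (z - z₀)) A :=
  ⟨hA, mem_of_superset hN fun _ => hz.le hA⟩

lemma IsContact.mul_norm_sub_le {ε : ℝ}
    (hu : ∀ y ∈ N, u y ≤ u z₀ + quadFn z₀ L A y - ε * ‖y - z₀‖ ^ 2) (hz₀ : z₀ ∈ N)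
    (hz : IsContact u N z₀ A L' z) : ε * ‖z - z₀‖ ≤ ‖L' - L‖ := by
  rcases (norm_nonneg (z - z₀)).eq_or_lt with h | h
  · simp [← h]
  have hmax : u z₀ - quadFn z₀ L' A z₀ ≤ u z - quadFn z₀ L' A z := hz.2 hz₀
  have hdiff : quadFn z₀ L' A z - quadFn z₀ L A z = (L' - L) (z - z₀) := by
    simp [quadFn]
  have hop : -(‖L' - L‖ * ‖z - z₀‖) ≤ (L' - L) (z - z₀) :=
    (abs_le.1 ((L' - L).le_opNorm (z - z₀))).1
  rw [quadFn_self] at hmax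
  refine le_of_mul_le_mul_right ?_ h
  linarith [hu z hz.1, sq ‖z - z₀‖]

lemma eventually_forall_isContact {ε : ℝ} (hε : 0 < ε)
    (hu : ∀ y ∈ N, u y ≤ u z₀ + quadFn z₀ L A y - ε * ‖y - z₀‖ ^ 2) (hz₀ : z₀ ∈ N)
    {p : E × (E →L[ℝ] ℝ) → Prop} (hp : ∀ᶠ w in 𝓝 (z₀, L), p w) :
    ∀ᶠ L' in 𝓝 L, ∀ z, IsContact u N z₀ A L' z → p (z, L') := by
  obtain ⟨ρ, hρ, hball⟩ := Metric.eventually_nhds_iff_ball.1 hp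
  have hnear : ∀ᶠ L' in 𝓝 L, ‖L' - L‖ < min ρ (ε * ρ) := by
    have hcont : ContinuousAt (fun L' => ‖L' - L‖) L := by fun_prop
    exact hcont.eventually_lt_const (by simpa using ⟨hρ, mul_pos hε hρ⟩)
  filter_upwards [hnear] with L' hL' z hz
  refine hball _ ?_
  rw [← ball_prod_same, mem_prod, mem_ball_iff_norm, mem_ball_iff_norm]
  exact ⟨lt_of_mul_lt_mul_left ((hz.mul_norm_sub_le hu hz₀).trans_lt
    (hL'.trans_le (min_le_right _ _))) hε.le, hL'.trans_le (min_le_left _ _)⟩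

/-- The maximum of `u - quadFn z₀ (L₀ + s • A v) A` over `N` has `L₀ v + s A v v` as subgradient in
`s`, hence is an explicit quadratic in `s`; the contact inequality at `s = 1` then is the one at
`s = 0` with the paraboloid translated by `v`. -/
lemma IsContact.le_add_quadFn_add_vector (hA : ∀ v w, A v w = A w v)
    (h₁ : IsContact u N z₀ A L₀ z₁) {v : E}
    (hv : ∀ s ∈ Icc (0 : ℝ) 1, ∃ z, IsContact u N z₀ A (L₀ + s • A v) z ∧
      (L₀ + s • A v + A (z - z₀)) v = 0) {y : E} (hy : y ∈ N) :
    u y ≤ u z₁ + quadFn z₁ (L₀ + A (z₁ - z₀)) A (y + v) := by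
  choose! z hz hzv using hv
  set val : ℝ → ℝ := fun s => u (z s) - quadFn z₀ (L₀ + s • A v) A (z s) with hval
  have hquad : ∀ s x, quadFn z₀ (L₀ + s • A v) A x = quadFn z₀ L₀ A x + s * A v (x - z₀) :=
    fun s x => by simp [quadFn]; ring
  have hsub : ∀ s ∈ Icc (0 : ℝ) 1, ∀ t ∈ Icc (0 : ℝ) 1,
      (t - s) * (L₀ v + s * A v v) ≤ val t - val s := fun s hs t ht => by
    have hmax := (hz t ht).2 (hz s hs).1
    have hslope := hzv s hs
    simp only [mem_ofPred_eq, hquad, add_apply, smul_apply, smul_eq_mul, hA _ v, hval]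
      at hmax hslope ⊢
    rw [show L₀ v + s * A v v = -A v (z s - z₀) by linarith]
    linarith
  have hval₁ : val 1 - val 0 = L₀ v + 1 / 2 * A v v := by
    rw [← integral_eq_sub_of_subgradient zero_le_one hsub (by fun_prop)]
    rw [intervalIntegral.integral_add (by simp) (Continuous.intervalIntegrable (by fun_prop) _ _)]
    simp
  have hval₀ : val 0 ≤ u z₁ - quadFn z₀ L₀ A z₁ := by
    simpa [hval] using h₁.2 (hz 0 (by simp)).1
  have hmax : u y - quadFn z₀ (L₀ + (1 : ℝ) • A v) A y ≤ val 1 := (hz 1 (by simp)).2 hy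
  have hshift : quadFn z₁ (L₀ + A (z₁ - z₀)) A (y + v) =
      quadFn z₁ (L₀ + A (z₁ - z₀)) A y + A v (y - z₀) + L₀ v + 1 / 2 * A v v := by
    simp only [quadFn, add_apply, map_add, map_sub, sub_apply, hA _ v]
    ring
  rw [hquad, one_mul] at hmax
  linarith [quadFn_sub_quadFn (z₀ := z₀) (L := L₀) hA z₁ y]

lemma IsContact.eventually_le_add_quadFn_add_vector (hA : ∀ v w, A v w = A w v)
    (h₁ : IsContact u N z₀ A L₀ z₁) {W : Submodule ℝ E}
    (hW : ∀ᶠ L in 𝓝 L₀, ∃ z, IsContact u N z₀ A L z ∧ ∀ v ∈ W, (L + A (z - z₀)) v = 0) :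
    ∀ᶠ v in 𝓝 0, v ∈ W → ∀ y ∈ N, u y ≤ u z₁ + quadFn z₁ (L₀ + A (z₁ - z₀)) A (y + v) := by
  obtain ⟨ρ, hρ, hball⟩ := Metric.eventually_nhds_iff_ball.1 hW
  have hcont : ContinuousAt (fun v => ‖A v‖) 0 := by fun_prop
  filter_upwards [hcont.eventually_lt_const (by simpa using hρ)] with v hv hvW y hy
  refine h₁.le_add_quadFn_add_vector hA (fun s hs => ?_) hy
  have hs : ‖s • A v‖ < ρ := by
    rw [norm_smul, Real.norm_of_nonneg hs.1]
    exact (mul_le_of_le_one_left (norm_nonneg _) hs.2).trans_lt hv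
  obtain ⟨z, hz, hzW⟩ := hball (L₀ + s • A v) (by simpa [mem_ball_iff_norm] using hs)
  exact ⟨z, hz, hzW v hvW⟩

lemma IsContact.apply_apply_nonneg (hA : ∀ v w, A v w = A w v)
    (h₁ : IsContact u N z₀ A L₀ z₁) {W : Submodule ℝ E}
    (hW : ∀ᶠ L in 𝓝 L₀, ∃ z, IsContact u N z₀ A L z ∧ ∀ v ∈ W, (L + A (z - z₀)) v = 0)
    {v : E} (hv : v ∈ W) : 0 ≤ A v v := by
  have hshift := h₁.eventually_le_add_quadFn_add_vector hA hW
  have hpos : Tendsto (fun t : ℝ => t • v) (𝓝[≠] 0) (𝓝 0) :=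
    ((show Continuous fun t : ℝ => t • v by fun_prop).tendsto' 0 0 (zero_smul ℝ v)).mono_left
      inf_le_left
  have hneg : Tendsto (fun t : ℝ => (-t) • v) (𝓝[≠] 0) (𝓝 0) := by simpa using hpos.neg
  obtain ⟨t, ht, ht', ht₀⟩ := ((hpos.eventually hshift).and
    ((hneg.eventually hshift).and self_mem_nhdsWithin)).exists
  have hle := ht (W.smul_mem t hv) z₁ h₁.1
  have hle' := ht' (W.smul_mem (-t) hv) z₁ h₁.1
  simp only [quadFn_add_vector, map_smul, smul_apply, smul_eq_mul] at hle hle'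
  refine nonneg_of_mul_nonneg_right ?_ (sq_pos_of_ne_zero ht₀)
  linarith

lemma IsContact.isSuperjet_bilinearComp (hA : ∀ v w, A v w = A w v)
    (h₁ : IsContact u N z₀ A L₀ z₁) (hN : N ∈ 𝓝 z₁) {W : Submodule ℝ E}
    (hW : ∀ᶠ L in 𝓝 L₀, ∃ z, IsContact u N z₀ A L z ∧ ∀ v ∈ W, (L + A (z - z₀)) v = 0)
    (h₁W : ∀ v ∈ W, (L₀ + A (z₁ - z₀)) v = 0) {σ : E →L[ℝ] E} (hσ : ∀ v, σ v - v ∈ W) :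
    IsSuperjet u z₁ (L₀ + A (z₁ - z₀)) (A.bilinearComp σ σ) := by
  refine ⟨fun v w => hA (σ v) (σ w), ?_⟩
  have hlim : Tendsto (fun y => σ (y - z₁) - (y - z₁)) (𝓝 z₁) (𝓝 0) :=
    (show Continuous fun y => σ (y - z₁) - (y - z₁) by fun_prop).tendsto' _ _ (by simp)
  filter_upwards [hN, hlim.eventually (h₁.eventually_le_add_quadFn_add_vector hA hW)]
    with y hy hle
  refine (hle (hσ _) y hy).trans_eq ?_
  have hL : (L₀ + A (z₁ - z₀)) (σ (y - z₁)) = (L₀ + A (z₁ - z₀)) (y - z₁) := by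
    rw [← sub_eq_zero, ← map_sub, h₁W _ (hσ _)]
  rw [show y + (σ (y - z₁) - (y - z₁)) = z₁ + σ (y - z₁) by abel, quadFn_add_vector, hL]
  simp [quadFn]

lemma exists_eventually_exists_isContact_mem {ι : Type*} [Countable ι] (hN : IsCompact N)
    (hne : N.Nonempty) (hu : UpperSemicontinuousOn u N) {O : Set (E →L[ℝ] ℝ)} (hO : IsOpen O)
    (hOne : O.Nonempty) {C : ι → Set (E →L[ℝ] ℝ)} (hC : ∀ i, IsClosed (C i))
    (hOC : ∀ L ∈ O, ∀ z, IsContact u N z₀ A L z → ∃ i, L + A (z - z₀) ∈ C i) :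
    ∃ i, ∃ L₀ ∈ O, ∀ᶠ L in 𝓝 L₀, ∃ z, IsContact u N z₀ A L z ∧ L + A (z - z₀) ∈ C i := by
  have hcover : O ⊆ ⋃ i, {L | ∃ z, IsContact u N z₀ A L z ∧ L + A (z - z₀) ∈ C i} := by
    intro L hL
    obtain ⟨z, hz⟩ := exists_isContact hN hne hu L
    obtain ⟨i, hi⟩ := hOC L hL z hz
    exact mem_iUnion.2 ⟨i, z, hz, hi⟩
  obtain ⟨i, L₀, hL₀, hi⟩ := exists_inter_interior_nonempty_of_subset_iUnion hO hOne
    (fun i => isClosed_setOf_exists_isContact hN hu (hC i)) hcover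
  exact ⟨i, L₀, hL₀, mem_interior_iff_mem_nhds.1 hi⟩

end Contact

section SpaceTime

variable {d : ℕ} {mb : Euc d → ℝ} {L : Euc d × ℝ →L[ℝ] ℝ}
  {A : Euc d × ℝ →L[ℝ] Euc d × ℝ →L[ℝ] ℝ} {φ : Euc d × ℝ → ℝ}

/-- The spatial part of a linear form on space-time, identified with a vector. -/
def gradPart : (Euc d × ℝ →L[ℝ] ℝ) →L[ℝ] Euc d where
  toFun L := (InnerProductSpace.toDual ℝ (Euc d)).symm (L ∘L .inl ℝ (Euc d) ℝ)
  map_add' L M := by simp [ContinuousLinearMap.add_comp]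
  map_smul' c L := by simp [ContinuousLinearMap.smul_comp]
  cont := (InnerProductSpace.toDual ℝ (Euc d)).symm.continuous.comp (by fun_prop)

/-- The spatial part of a bilinear form on space-time, identified with an operator. -/
def hessPart (A : Euc d × ℝ →L[ℝ] Euc d × ℝ →L[ℝ] ℝ) : Euc d →L[ℝ] Euc d :=
  gradPart ∘L A ∘L .inl ℝ (Euc d) ℝ

/-- The effective operator `effOp` as a function of the space-time gradient `L` and Hessian `A`
of the test function. -/
def jetOp (mb : Euc d → ℝ) (L : Euc d × ℝ →L[ℝ] ℝ) (A : Euc d × ℝ →L[ℝ] Euc d × ℝ →L[ℝ] ℝ) : ℝ :=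
  mb (‖gradPart L‖⁻¹ • gradPart L) * L (0, 1) -
    clTrace (projPerp (‖gradPart L‖⁻¹ • gradPart L) ∘L hessPart A)

lemma inner_gradPart (v : Euc d) : inner ℝ (gradPart L) v = L (v, 0) := by
  simp [gradPart]

lemma inner_hessPart (v w : Euc d) : inner ℝ (hessPart A v) w = A (v, 0) (w, 0) := by
  simp [hessPart, inner_gradPart]

lemma spaceGrad_eq_gradPart (hφ : Differentiable ℝ φ) (x : Euc d) (t : ℝ) :
    spaceGrad φ x t = gradPart (fderiv ℝ φ (x, t)) := by
  have hslice : HasFDerivAt (fun y => φ (y, t)) (fderiv ℝ φ (x, t) ∘L .inl ℝ (Euc d) ℝ) x :=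
    (hφ (x, t)).hasFDerivAt.comp x (hasFDerivAt_prodMk_left x t)
  simp [spaceGrad, gradient, gradPart, hslice.fderiv]

lemma spaceHess_eq_hessPart (hφ : Differentiable ℝ φ) (hφ' : Differentiable ℝ (fderiv ℝ φ))
    (x : Euc d) (t : ℝ) : spaceHess φ x t = hessPart (fderiv ℝ (fderiv ℝ φ) (x, t)) := by
  have hslice : HasFDerivAt (fun y => gradPart (fderiv ℝ φ (y, t)))
      (hessPart (fderiv ℝ (fderiv ℝ φ) (x, t))) x :=
    gradPart.hasFDerivAt.comp x
      ((hφ' (x, t)).hasFDerivAt.comp x (hasFDerivAt_prodMk_left x t))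
  have hgrad : (fun y => gradient (fun z => φ (z, t)) y) =
      fun y => gradPart (fderiv ℝ φ (y, t)) :=
    funext fun y => spaceGrad_eq_gradPart hφ y t
  rw [spaceHess, hgrad, hslice.fderiv]

lemma timeDeriv_eq_fderiv (hφ : Differentiable ℝ φ) (x : Euc d) (t : ℝ) :
    timeDeriv φ x t = fderiv ℝ φ (x, t) (0, 1) := by
  have hslice : HasFDerivAt (fun s => φ (x, s)) (fderiv ℝ φ (x, t) ∘L .inr ℝ (Euc d) ℝ) t :=
    (hφ (x, t)).hasFDerivAt.comp t (hasFDerivAt_prodMk_right x t)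
  simp [timeDeriv, hslice.hasDerivAt.deriv]

lemma effOp_eq_jetOp (mb : Euc d → ℝ) (hφ : Differentiable ℝ φ)
    (hφ' : Differentiable ℝ (fderiv ℝ φ)) (x : Euc d) (t : ℝ) :
    effOp mb φ x t = jetOp mb (fderiv ℝ φ (x, t)) (fderiv ℝ (fderiv ℝ φ) (x, t)) := by
  rw [effOp, jetOp, spaceGrad_eq_gradPart hφ, spaceHess_eq_hessPart hφ hφ',
    timeDeriv_eq_fderiv hφ]

lemma continuous_clTrace : Continuous (clTrace : (Euc d →L[ℝ] Euc d) → ℝ) :=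
  LinearMap.continuous_of_finiteDimensional
    (LinearMap.trace ℝ (Euc d) ∘ₗ ContinuousLinearMap.coeLM ℝ)

lemma continuous_projPerp : Continuous (projPerp : Euc d → Euc d →L[ℝ] Euc d) := by
  unfold projPerp
  exact continuous_const.sub ((ContinuousLinearMap.smulRightL ℝ (Euc d) (Euc d)).continuous₂.comp
    ((innerSL ℝ).continuous.prodMk continuous_id))

lemma continuous_hessPart :
    Continuous (hessPart : (Euc d × ℝ →L[ℝ] Euc d × ℝ →L[ℝ] ℝ) → Euc d →L[ℝ] Euc d) := by
  unfold hessPart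
  fun_prop

lemma continuousAt_jetOp (hmb : ContinuousOn mb (Metric.sphere 0 1)) (hL : gradPart L ≠ 0) :
    ContinuousAt (fun j : (Euc d × ℝ →L[ℝ] ℝ) × (Euc d × ℝ →L[ℝ] Euc d × ℝ →L[ℝ] ℝ) =>
      jetOp mb j.1 j.2) (L, A) := by
  set unit : (Euc d × ℝ →L[ℝ] ℝ) × (Euc d × ℝ →L[ℝ] Euc d × ℝ →L[ℝ] ℝ) → Euc d :=
    fun j => ‖gradPart j.1‖⁻¹ • gradPart j.1
  have hgrad : ContinuousAt (fun j => gradPart j.1) (L, A) := by fun_prop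
  have hunit : ContinuousAt unit (L, A) := (hgrad.norm.inv₀ (norm_ne_zero_iff.2 hL)).smul hgrad
  have hsphere : ∀ᶠ j in 𝓝 (L, A), unit j ∈ Metric.sphere 0 1 := by
    filter_upwards [hgrad.eventually_ne hL] with j hj
    simpa using norm_smul_inv_norm (𝕜 := ℝ) hj
  have hmobility : ContinuousAt (fun j => mb (unit j)) (L, A) :=
    (hmb _ hsphere.self_of_nhds).tendsto.comp (tendsto_nhdsWithin_iff.2 ⟨hunit, hsphere⟩)
  have hcurvature : ContinuousAt (fun j => clTrace (projPerp (unit j) ∘L hessPart j.2)) (L, A) :=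
    continuous_clTrace.continuousAt.comp ((continuous_projPerp.continuousAt.comp hunit).clm_comp
      (continuous_hessPart.comp continuous_snd).continuousAt)
  exact (hmobility.mul (by fun_prop)).sub hcurvature

/-- The Euclidean inner product on space-time as a bilinear form; the norm of `Euc d × ℝ` is the
supremum norm, so its square is dominated by this form but not equal to it. -/
def spaceTimeInner (d : ℕ) : Euc d × ℝ →L[ℝ] Euc d × ℝ →L[ℝ] ℝ :=
  (innerSL ℝ).bilinearComp (.fst ℝ (Euc d) ℝ) (.fst ℝ (Euc d) ℝ) +
    (innerSL ℝ).bilinearComp (.snd ℝ (Euc d) ℝ) (.snd ℝ (Euc d) ℝ)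

lemma spaceTimeInner_apply (v w : Euc d × ℝ) :
    spaceTimeInner d v w = inner ℝ v.1 w.1 + v.2 * w.2 := by
  simp [spaceTimeInner, mul_comm]

lemma add_smul_spaceTimeInner_symm (hA : ∀ v w, A v w = A w v) (ε : ℝ) (v w : Euc d × ℝ) :
    (A + ε • spaceTimeInner d) v w = (A + ε • spaceTimeInner d) w v := by
  simp only [add_apply, smul_apply, spaceTimeInner_apply, hA v w, real_inner_comm v.1, mul_comm]

lemma norm_sq_le_spaceTimeInner (v : Euc d × ℝ) : ‖v‖ ^ 2 ≤ spaceTimeInner d v v := by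
  rw [spaceTimeInner_apply, real_inner_self_eq_norm_sq, Prod.norm_def, Real.norm_eq_abs]
  rcases max_cases ‖v.1‖ |v.2| with h | h <;> rw [h.1]
  · nlinarith [sq_nonneg v.2]
  · nlinarith [sq_nonneg ‖v.1‖, sq_abs v.2]

lemma jetOp_nonpos_of_forall_pos (hmb : ContinuousOn mb (Metric.sphere 0 1))
    (hL : gradPart L ≠ 0) (h : ∀ ε > (0 : ℝ), jetOp mb L (A + ε • spaceTimeInner d) ≤ 0) :
    jetOp mb L A ≤ 0 :=
  le_of_tendsto ((continuousAt_jetOp hmb hL).tendsto.comp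
    (tendsto_const_nhds.prodMk_nhds (tendsto_add_smul_nhdsGT_zero A (spaceTimeInner d))))
    (eventually_mem_nhdsWithin.mono h)

lemma quadFn_add_smul_spaceTimeInner {z₀ : Euc d × ℝ} (ε : ℝ) (z : Euc d × ℝ) :
    quadFn z₀ L (A + ε • spaceTimeInner d) z =
      quadFn z₀ L A z + ε / 2 * spaceTimeInner d (z - z₀) (z - z₀) := by
  simp only [quadFn, add_apply, smul_apply, smul_eq_mul]
  ring

lemma IsSuperjet.strictLocalMax {u : Euc d × ℝ → ℝ} {z : Euc d × ℝ} (hj : IsSuperjet u z L A)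
    {ε : ℝ} (hε : 0 < ε) :
    StrictLocalMax (fun y => u y - quadFn z L (A + ε • spaceTimeInner d) y) z := by
  refine ⟨_, hj.2, fun y hy hne => ?_⟩
  have hpos : 0 < spaceTimeInner d (y - z) (y - z) :=
    (pow_pos (norm_pos_iff.2 (sub_ne_zero.2 hne)) 2).trans_le (norm_sq_le_spaceTimeInner _)
  have hle : u y ≤ u z + quadFn z L A y := hy
  beta_reduce
  rw [quadFn_self, quadFn_add_smul_spaceTimeInner]
  linarith [mul_pos hε hpos]

lemma StrictLocalMax.eventually_le_quadFn_sub {u : Euc d × ℝ → ℝ} {z₀ : Euc d × ℝ}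
    (hmax : StrictLocalMax (fun z => u z - φ z) z₀) {φ' : Euc d × ℝ → Euc d × ℝ →L[ℝ] ℝ}
    (hφ : ∀ z, HasFDerivAt φ (φ' z) z) (hφ' : HasFDerivAt φ' A z₀) {ε : ℝ} (hε : 0 < ε) :
    ∀ᶠ z in 𝓝 z₀, u z ≤ u z₀ + quadFn z₀ (φ' z₀) (A + ε • spaceTimeInner d) z -
      ε / 4 * ‖z - z₀‖ ^ 2 := by
  obtain ⟨V, hV, hVmax⟩ := hmax
  filter_upwards [hV, (sub_quadFn_isLittleO hφ hφ').def (show 0 < ε / 4 by positivity)]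
    with z hz htaylor
  have hle : u z - φ z ≤ u z₀ - φ z₀ := by
    rcases eq_or_ne z z₀ with rfl | hne
    exacts [le_rfl, (hVmax z hz hne).le]
  have htaylor := (le_abs_self _).trans htaylor
  rw [Real.norm_of_nonneg (by positivity)] at htaylor
  rw [quadFn_add_smul_spaceTimeInner]
  linarith [mul_le_mul_of_nonneg_left (norm_sq_le_spaceTimeInner (z - z₀)) hε.le]

lemma tendsto_norm_comp_hessPart (P : Euc d →L[ℝ] Euc d)
    (B : Euc d × ℝ →L[ℝ] Euc d × ℝ →L[ℝ] ℝ) :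
    Tendsto (fun ε : ℝ => ‖P ∘L hessPart (A + ε • B)‖) (𝓝[>] 0) (𝓝 ‖P ∘L hessPart A‖) := by
  have hcont : Continuous fun C : Euc d × ℝ →L[ℝ] Euc d × ℝ →L[ℝ] ℝ => ‖P ∘L hessPart C‖ :=
    (continuous_const.clm_comp continuous_hessPart).norm
  exact (hcont.tendsto A).comp (tendsto_add_smul_nhdsGT_zero A B)

end SpaceTime

section Subsolution

variable {d : ℕ} {mb : Euc d → ℝ} {R : Euc d → Prop} {K : ℝ} {U : Set (Euc d × ℝ)}
  {u : Euc d × ℝ → ℝ}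

/-- `u` is a viscosity subsolution of the effective equation in `U`, in the sense in which a
vanishing gradient is tested only together with a vanishing Hessian. -/
def IsViscositySubsolution (mb : Euc d → ℝ) (U : Set (Euc d × ℝ)) (u : Euc d × ℝ → ℝ) : Prop :=
  ∀ φ : Euc d × ℝ → ℝ, ContDiff ℝ (⊤ : ℕ∞) φ → ∀ (x : Euc d) (t : ℝ), (x, t) ∈ U →
    StrictLocalMax (fun p => u p - φ p) (x, t) →
    (spaceGrad φ x t ≠ 0 → effOp mb φ x t ≤ 0) ∧
    (spaceGrad φ x t = 0 → spaceHess φ x t = 0 → timeDeriv φ x t ≤ 0)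

/-- `u` is a subsolution of the effective equation in `U` off the resonant gradients `R`: at
gradients in `R` only the velocity of almost flat test functions is controlled. The paper's
conditions (a)-(c) are the case `R = RatDir`. -/
def IsSubsolutionOff (mb : Euc d → ℝ) (R : Euc d → Prop) (K : ℝ) (U : Set (Euc d × ℝ))
    (u : Euc d × ℝ → ℝ) : Prop :=
  ∀ φ : Euc d × ℝ → ℝ, ContDiff ℝ (⊤ : ℕ∞) φ → ∀ (x : Euc d) (t : ℝ), (x, t) ∈ U →
    StrictLocalMax (fun p => u p - φ p) (x, t) →
    (¬ R (spaceGrad φ x t) → effOp mb φ x t ≤ 0) ∧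
    (R (spaceGrad φ x t) → spaceGrad φ x t ≠ 0 → ∀ δ > 0,
      ‖(projPerp (‖spaceGrad φ x t‖⁻¹ • spaceGrad φ x t)).comp (spaceHess φ x t)‖
        ≤ δ * ‖spaceGrad φ x t‖ →
      timeDeriv φ x t ≤ K * δ * ‖spaceGrad φ x t‖) ∧
    (spaceGrad φ x t = 0 → spaceHess φ x t = 0 → timeDeriv φ x t ≤ 0)

variable {z : Euc d × ℝ} {L : Euc d × ℝ →L[ℝ] ℝ} {A : Euc d × ℝ →L[ℝ] Euc d × ℝ →L[ℝ] ℝ}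

lemma IsSubsolutionOff.of_isSuperjet (h : IsSubsolutionOff mb R K U u) (hz : z ∈ U)
    (hj : IsSuperjet u z L A) {ε : ℝ} (hε : 0 < ε) :
    (¬ R (gradPart L) → jetOp mb L (A + ε • spaceTimeInner d) ≤ 0) ∧
    (R (gradPart L) → gradPart L ≠ 0 → ∀ δ > 0,
      ‖projPerp (‖gradPart L‖⁻¹ • gradPart L) ∘L hessPart (A + ε • spaceTimeInner d)‖
        ≤ δ * ‖gradPart L‖ →
      L (0, 1) ≤ K * δ * ‖gradPart L‖) := by
  have hsymm := add_smul_spaceTimeInner_symm hj.1 ε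
  set φ := quadFn z L (A + ε • spaceTimeInner d)
  have hφ : Differentiable ℝ φ := contDiff_quadFn.differentiable one_ne_zero
  have hφ' : Differentiable ℝ (fderiv ℝ φ) := by
    rw [fderiv_quadFn hsymm]
    fun_prop
  obtain ⟨hoff, hon, -⟩ := h φ contDiff_quadFn z.1 z.2 hz (hj.strictLocalMax hε)
  rw [spaceGrad_eq_gradPart hφ, effOp_eq_jetOp mb hφ hφ', Prod.mk.eta,
    fderiv_fderiv_quadFn hsymm, fderiv_quadFn_self hsymm] at hoff
  rw [spaceGrad_eq_gradPart hφ, spaceHess_eq_hessPart hφ hφ', timeDeriv_eq_fderiv hφ,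
    Prod.mk.eta, fderiv_fderiv_quadFn hsymm, fderiv_quadFn_self hsymm] at hon
  exact ⟨hoff, hon⟩

lemma IsSubsolutionOff.jetOp_nonpos (h : IsSubsolutionOff mb R K U u)
    (hmb : ContinuousOn mb (Metric.sphere 0 1)) (hz : z ∈ U) (hj : IsSuperjet u z L A)
    (hR : ¬ R (gradPart L)) (hL : gradPart L ≠ 0) : jetOp mb L A ≤ 0 :=
  jetOp_nonpos_of_forall_pos hmb hL fun _ hε => (h.of_isSuperjet hz hj hε).1 hR

lemma IsSubsolutionOff.apply_time_nonpos (h : IsSubsolutionOff mb R K U u) (hz : z ∈ U)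
    (hj : IsSuperjet u z L A) (hR : R (gradPart L)) (hL : gradPart L ≠ 0)
    (hflat : (ℝ ∙ gradPart L)ᗮ.starProjection ∘L hessPart A = 0) : L (0, 1) ≤ 0 := by
  have hbound : ∀ δ > 0, L (0, 1) ≤ K * δ * ‖gradPart L‖ := by
    intro δ hδ
    have hcurv := tendsto_norm_comp_hessPart (A := A)
      (projPerp (‖gradPart L‖⁻¹ • gradPart L)) (spaceTimeInner d)
    rw [projPerp_inv_norm_smul, hflat, norm_zero, ← projPerp_inv_norm_smul] at hcurv
    obtain ⟨ε, hε, hε₀⟩ := ((hcurv.eventually_le_const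
      (mul_pos hδ (norm_pos_iff.2 hL))).and self_mem_nhdsWithin).exists
    exact (h.of_isSuperjet hz hj hε₀).2 hR hL δ hδ hε
  have hlim : Tendsto (fun δ => K * δ * ‖gradPart L‖) (𝓝[>] 0) (𝓝 0) :=
    ((show Continuous fun δ => K * δ * ‖gradPart L‖ by fun_prop).tendsto' 0 0
      (by simp)).mono_left nhdsWithin_le_nhds
  exact ge_of_tendsto hlim (eventually_mem_nhdsWithin.mono hbound)

/-- The space-time directions tangent to the time slice and orthogonal to `p`, that is, to the
level set of a function with spatial gradient `p`. -/
def levelTangent (p : Euc d) : Submodule ℝ (Euc d × ℝ) := (ℝ ∙ p)ᗮ.prod ⊥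

lemma apply_eq_zero_of_mem_levelTangent {p : Euc d} (hL : gradPart L ∈ ℝ ∙ p) {v : Euc d × ℝ}
    (hv : v ∈ levelTangent p) : L v = 0 := by
  obtain ⟨x, t⟩ := v
  obtain ⟨hx, rfl : t = 0⟩ := Submodule.mem_prod.1 hv
  rw [← inner_gradPart]
  exact Submodule.inner_right_of_mem_orthogonal hL hx

lemma clTrace_projPerp_comp_hessPart_nonneg {p : Euc d}
    (hA : ∀ v ∈ levelTangent p, 0 ≤ A v v) :
    0 ≤ clTrace (projPerp (‖p‖⁻¹ • p) ∘L hessPart A) := by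
  rw [projPerp_inv_norm_smul]
  refine trace_starProjection_comp_nonneg _ fun v hv => ?_
  rw [inner_hessPart]
  exact hA (v, 0) (Submodule.mem_prod.2 ⟨hv, rfl⟩)

/-- The projection of space-time onto the span of `p` and the time axis, along
`levelTangent p`. -/
def flatten (p : Euc d) : Euc d × ℝ →L[ℝ] Euc d × ℝ := (ℝ ∙ p).starProjection.prodMap (.id ℝ ℝ)

lemma flatten_sub_mem_levelTangent (p : Euc d) (v : Euc d × ℝ) :
    flatten p v - v ∈ levelTangent p := by
  refine Submodule.mem_prod.2 ⟨?_, by simp [flatten]⟩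
  rw [← neg_mem_iff]
  simp [flatten]

lemma starProjection_orthogonal_comp_hessPart_flatten (p : Euc d) :
    (ℝ ∙ p)ᗮ.starProjection ∘L hessPart (A.bilinearComp (flatten p) (flatten p)) = 0 := by
  have hhess : hessPart (A.bilinearComp (flatten p) (flatten p)) =
      (ℝ ∙ p).starProjection ∘L hessPart A ∘L (ℝ ∙ p).starProjection := by
    ext1 v
    refine ext_inner_right ℝ fun w => ?_
    simp [inner_hessPart, Submodule.inner_starProjection_left_eq_right, flatten]
  rw [hhess, ← ContinuousLinearMap.comp_assoc,
    (Submodule.isOrtho_orthogonal_left _).starProjection_comp_starProjection,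
    ContinuousLinearMap.zero_comp]

variable {N : Set (Euc d × ℝ)} {z₀ z₁ : Euc d × ℝ} {L₀ : Euc d × ℝ →L[ℝ] ℝ}

lemma IsSubsolutionOff.jetOp_nonpos_of_eventually_mem_span (h : IsSubsolutionOff mb R K U u)
    (hmb : ∀ e, ‖e‖ = 1 → 0 ≤ mb e) (hA : ∀ v w, A v w = A w v)
    (h₁ : IsContact u N z₀ A L₀ z₁) (hN : N ∈ 𝓝 z₁) (hz₁ : z₁ ∈ U)
    (hR : R (gradPart (L₀ + A (z₁ - z₀)))) (hp : gradPart (L₀ + A (z₁ - z₀)) ≠ 0)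
    (hspan : ∀ᶠ L in 𝓝 L₀, ∃ z, IsContact u N z₀ A L z ∧
      gradPart (L + A (z - z₀)) ∈ ℝ ∙ gradPart (L₀ + A (z₁ - z₀))) :
    jetOp mb (L₀ + A (z₁ - z₀)) A ≤ 0 := by
  set L₁ := L₀ + A (z₁ - z₀)
  set p := gradPart L₁
  have hW : ∀ᶠ L in 𝓝 L₀, ∃ z, IsContact u N z₀ A L z ∧
      ∀ v ∈ levelTangent p, (L + A (z - z₀)) v = 0 :=
    hspan.mono fun L ⟨z, hz, hzp⟩ => ⟨z, hz, fun v => apply_eq_zero_of_mem_levelTangent hzp⟩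
  have hflat : IsSuperjet u z₁ L₁ (A.bilinearComp (flatten p) (flatten p)) :=
    h₁.isSuperjet_bilinearComp hA hN hW
      (fun v => apply_eq_zero_of_mem_levelTangent (Submodule.mem_span_singleton_self p))
      (flatten_sub_mem_levelTangent p)
  have htime : L₁ (0, 1) ≤ 0 :=
    h.apply_time_nonpos hz₁ hflat hR hp (starProjection_orthogonal_comp_hessPart_flatten p)
  have htrace : 0 ≤ clTrace (projPerp (‖p‖⁻¹ • p) ∘L hessPart A) :=
    clTrace_projPerp_comp_hessPart_nonneg fun v hv => h₁.apply_apply_nonneg hA hW hv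
  have hmobility : 0 ≤ mb (‖p‖⁻¹ • p) := hmb _ (norm_smul_inv_norm (𝕜 := ℝ) hp)
  exact sub_nonpos.2 ((mul_nonpos_of_nonneg_of_nonpos hmobility htime).trans htrace)

lemma eventually_forall_isContact_jetOp_pos (hmb : ContinuousOn mb (Metric.sphere 0 1))
    {ε : ℝ} (hε : 0 < ε) (hcontact : ∀ y ∈ N, u y ≤ u z₀ + quadFn z₀ L A y - ε * ‖y - z₀‖ ^ 2)
    (hN : N ∈ 𝓝 z₀) (hL : gradPart L ≠ 0) (hpos : 0 < jetOp mb L A) :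
    ∀ᶠ L' in 𝓝 L, ∀ z, IsContact u N z₀ A L' z → N ∈ 𝓝 z ∧
      gradPart (L' + A (z - z₀)) ≠ 0 ∧ 0 < jetOp mb (L' + A (z - z₀)) A := by
  have hgrad : Tendsto (fun w : (Euc d × ℝ) × (Euc d × ℝ →L[ℝ] ℝ) => w.2 + A (w.1 - z₀))
      (𝓝 (z₀, L)) (𝓝 L) :=
    (show Continuous fun w : (Euc d × ℝ) × (Euc d × ℝ →L[ℝ] ℝ) => w.2 + A (w.1 - z₀) by
      fun_prop).tendsto' _ _ (by simp)
  have hjet : ContinuousAt (fun L' => jetOp mb L' A) L :=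
    (continuousAt_jetOp hmb hL).comp (f := fun L' => (L', A)) (by fun_prop)
  exact eventually_forall_isContact hε hcontact (mem_of_mem_nhds hN) <|
    (continuousAt_fst.eventually (eventually_mem_nhds_iff.2 hN)).and <|
    (hgrad.eventually (gradPart.continuous.continuousAt.eventually_ne hL)).and
      (hgrad.eventually (hjet.eventually_const_lt hpos))

variable {ι : Type*} [Countable ι] {k : ι → Euc d}

lemma IsSubsolutionOff.jetOp_nonpos_of_strict_contact (h : IsSubsolutionOff mb R K U u)
    (hRk : ∀ p, R p → ∃ i, p ∈ ℝ ∙ k i) (hmbc : ContinuousOn mb (Metric.sphere 0 1))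
    (hmb : ∀ e, ‖e‖ = 1 → 0 ≤ mb e) (hU : IsOpen U) (hu : UpperSemicontinuousOn u U)
    (hz₀ : z₀ ∈ U) (hA : ∀ v w, A v w = A w v) {ε : ℝ} (hε : 0 < ε)
    (hcontact : ∀ᶠ y in 𝓝 z₀, u y ≤ u z₀ + quadFn z₀ L A y - ε * ‖y - z₀‖ ^ 2)
    (hL : gradPart L ≠ 0) : jetOp mb L A ≤ 0 := by
  by_contra! hpos
  obtain ⟨ρ, hρ, hρN⟩ := Metric.nhds_basis_closedBall.mem_iff.1
    (hcontact.and (hU.mem_nhds hz₀))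
  set N := Metric.closedBall z₀ ρ
  have hNU : N ⊆ U := fun y hy => (hρN hy).2
  have hN : N ∈ 𝓝 z₀ := Metric.closedBall_mem_nhds z₀ hρ
  obtain ⟨O, hO, hOopen, hLO⟩ := mem_nhds_iff.1
    (eventually_forall_isContact_jetOp_pos hmbc hε (fun y hy => (hρN hy).1) hN hL hpos)
  have hres : ∀ L' ∈ O, ∀ z, IsContact u N z₀ A L' z → R (gradPart (L' + A (z - z₀))) := by
    intro L' hL' z hz
    obtain ⟨hNz, hne, hjet⟩ := hO hL' z hz
    by_contra hR
    exact hjet.not_ge (h.jetOp_nonpos hmbc (hNU hz.1) (hz.isSuperjet hA hNz) hR hne)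
  obtain ⟨i, L₀, hL₀, hi⟩ := exists_eventually_exists_isContact_mem
    (isCompact_closedBall z₀ ρ) ⟨z₀, mem_of_mem_nhds hN⟩ (hu.mono hNU) hOopen ⟨L, hLO⟩
    (C := fun i => gradPart ⁻¹' (ℝ ∙ k i : Submodule ℝ (Euc d)))
    (fun i => (Submodule.closed_of_finiteDimensional _).preimage gradPart.continuous)
    fun L' hL' z hz => hRk _ (hres L' hL' z hz)
  obtain ⟨z₁, h₁, hz₁⟩ := hi.self_of_nhds
  obtain ⟨hNz, hne, hjet⟩ := hO hL₀ z₁ h₁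
  refine hjet.not_ge (h.jetOp_nonpos_of_eventually_mem_span hmb hA h₁ hNz (hNU h₁.1)
    (hres L₀ hL₀ z₁ h₁) hne ?_)
  rw [span_singleton_eq_of_mem hne hz₁]
  exact hi

theorem irrational_directions_implies_viscosity_subsolution_general
    (hmbc : ContinuousOn mb (Metric.sphere 0 1)) (hmb : ∀ e, ‖e‖ = 1 → 0 ≤ mb e)
    (hRk : ∀ p, R p → ∃ i, p ∈ ℝ ∙ k i) (hU : IsOpen U) (hu : UpperSemicontinuousOn u U)
    (h : IsSubsolutionOff mb R K U u) : IsViscositySubsolution mb U u := by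
  intro φ hφ x t hxt hmax
  refine ⟨fun hgrad => ?_, (h φ hφ x t hxt hmax).2.2⟩
  have hd : Differentiable ℝ φ := hφ.differentiable (by simp)
  have hd' : Differentiable ℝ (fderiv ℝ φ) :=
    (hφ.fderiv_right (m := 1) (by norm_cast)).differentiable one_ne_zero
  have hsymm := second_derivative_symmetric (fun z => (hd z).hasFDerivAt) (hd' (x, t)).hasFDerivAt
  rw [spaceGrad_eq_gradPart hd] at hgrad
  rw [effOp_eq_jetOp mb hd hd']
  refine jetOp_nonpos_of_forall_pos hmbc hgrad fun ε hε => ?_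
  exact h.jetOp_nonpos_of_strict_contact hRk hmbc hmb hU hu hxt
    (add_smul_spaceTimeInner_symm hsymm ε) (div_pos hε four_pos)
    (hmax.eventually_le_quadFn_sub (fun z => (hd z).hasFDerivAt) (hd' (x, t)).hasFDerivAt hε)
    hgrad

end Subsolution

/-- The integer vector `k ∈ ℤ^d` as a point of `ℝ^d`. -/
def intVec (k : Fin d → ℤ) : Euc d := WithLp.toLp 2 fun i => (k i : ℝ)

lemma RatDir.exists_mem_span_intVec {p : Euc d} (hp : RatDir p) :
    ∃ k : Fin d → ℤ, p ∈ ℝ ∙ intVec k := by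
  obtain ⟨c, k, hck⟩ := hp
  exact ⟨k, Submodule.mem_span_singleton.2 ⟨c, by ext i; simp [intVec, hck i]⟩⟩

/-- Theorem 2.2: a subsolution of the effective equation in irrational directions
is a viscosity subsolution in the usual sense. -/
theorem irrational_directions_implies_viscosity_subsolution
    (d : ℕ) (hd : 2 ≤ d) (θ Θ : ℝ) (hθ : 0 < θ) (hθΘ : θ ≤ Θ)
    (mb : Euc d → ℝ) (hmbc : ContinuousOn mb (Metric.sphere (0 : Euc d) 1))
    (hmbr : ∀ e : Euc d, ‖e‖ = 1 → mb e ∈ Set.Icc θ Θ)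
    (U : Set (Euc d × ℝ)) (hUo : IsOpen U) (hU : U ⊆ {p : Euc d × ℝ | 0 < p.2})
    (ut : Euc d × ℝ → ℝ)
    (hloc : ∀ p₀ : Euc d × ℝ, 0 < p₀.2 → ∃ V ∈ nhds p₀, ∃ C : ℝ, ∀ p ∈ V, |ut p| ≤ C)
    (husc : UpperSemicontinuousOn ut {p : Euc d × ℝ | 0 < p.2})
    (hK : ∃ K > 0, ∀ φ : Euc d × ℝ → ℝ, ContDiff ℝ (⊤ : ℕ∞) φ →
      ∀ (x : Euc d) (t : ℝ), (x, t) ∈ U →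
        StrictLocalMax (fun p => ut p - φ p) (x, t) →
        (¬ RatDir (spaceGrad φ x t) → effOp mb φ x t ≤ 0) ∧
        (RatDir (spaceGrad φ x t) → spaceGrad φ x t ≠ 0 →
          ∀ δ > 0,
            ‖(projPerp (‖spaceGrad φ x t‖⁻¹ • spaceGrad φ x t)).comp (spaceHess φ x t)‖
              ≤ δ * ‖spaceGrad φ x t‖ →
            timeDeriv φ x t ≤ K * δ * ‖spaceGrad φ x t‖) ∧
        (spaceGrad φ x t = 0 → spaceHess φ x t = 0 → timeDeriv φ x t ≤ 0)) :
    ∀ φ : Euc d × ℝ → ℝ, ContDiff ℝ (⊤ : ℕ∞) φ →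
      ∀ (x : Euc d) (t : ℝ), (x, t) ∈ U →
        StrictLocalMax (fun p => ut p - φ p) (x, t) →
        (spaceGrad φ x t ≠ 0 → effOp mb φ x t ≤ 0) ∧
        (spaceGrad φ x t = 0 → spaceHess φ x t = 0 → timeDeriv φ x t ≤ 0) := by
  obtain ⟨K, -, hK⟩ := hK
  exact irrational_directions_implies_viscosity_subsolution_general hmbc
    (fun e he => hθ.le.trans (hmbr e he).1) (fun p hp => hp.exists_mem_span_intVec) hUo
    (husc.mono hU) hK

end
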